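/- For 0 ≤ i < j ≤ n+2 and 0 ≤ i′ < j′ ≤ n+2 with (i,j) ≠ (i′,j′), there exists an irreducible morphism M(i+1, j) → M(i′+1, j′) in rep Q if and only if the segment γ(i′,j′) is a pivot of the segment γ(i,j). -/

import Mathlib

open scoped Classical

noncomputable section

namespace CambrianA

/-! ### Combinatorics of a type `A_{n+2}` quiver.

Vertices are `1, …, n+2`.  For `1 ≤ i ≤ n+1`, `ε i = true` means that the arrow between
`i` and `i+1` is oriented `i → i+1` (`i` is *upper-barred*), and `ε i = false` means it is
oriented `(i+1) → i` (`i` is *lower-barred*). -/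

/-- `MaxIncr n ε i j` : the path `i → i+1 → ⋯ → j` is a maximal increasing path of `Q`. -/
def MaxIncr (n : ℕ) (ε : ℕ → Bool) (i j : ℕ) : Prop :=
  1 ≤ i ∧ i ≤ j ∧ j ≤ n + 2 ∧ (∀ ℓ, i ≤ ℓ → ℓ < j → ε ℓ = true) ∧
    (i = 1 ∨ ε (i - 1) = false) ∧ (j = n + 2 ∨ ε j = false)

/-- `MaxDecr n ε i j` : the path `i → i-1 → ⋯ → j` is a maximal decreasing path of `Q`. -/
def MaxDecr (n : ℕ) (ε : ℕ → Bool) (i j : ℕ) : Prop :=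
  1 ≤ j ∧ j ≤ i ∧ i ≤ n + 2 ∧ (∀ ℓ, j ≤ ℓ → ℓ < i → ε ℓ = false) ∧
    (i = n + 2 ∨ ε i = true) ∧ (j = 1 ∨ ε (j - 1) = true)

/-- Vertices of the polygon lying on the lower boundary: `0`, `n+2` and lower-barred ones. -/
def LowerVertex (n : ℕ) (ε : ℕ → Bool) (x : ℕ) : Prop :=
  x = 0 ∨ x = n + 2 ∨ (1 ≤ x ∧ x ≤ n + 1 ∧ ε x = false)

/-- Vertices of the polygon lying on the upper boundary: `0`, `n+2` and upper-barred ones. -/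
def UpperVertex (n : ℕ) (ε : ℕ → Bool) (x : ℕ) : Prop :=
  x = 0 ∨ x = n + 2 ∨ (1 ≤ x ∧ x ≤ n + 1 ∧ ε x = true)

/-- `(a,b)` is a lower boundary edge: `a < b` are consecutive lower vertices. -/
def LowerEdge (n : ℕ) (ε : ℕ → Bool) (a b : ℕ) : Prop :=
  LowerVertex n ε a ∧ LowerVertex n ε b ∧ a < b ∧
    ∀ c, LowerVertex n ε c → ¬(a < c ∧ c < b)

/-- `(a,b)` is an upper boundary edge: `a < b` are consecutive upper vertices. -/
def UpperEdge (n : ℕ) (ε : ℕ → Bool) (a b : ℕ) : Prop :=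
  UpperVertex n ε a ∧ UpperVertex n ε b ∧ a < b ∧
    ∀ c, UpperVertex n ε c → ¬(a < c ∧ c < b)

def BoundaryEdge (n : ℕ) (ε : ℕ → Bool) (a b : ℕ) : Prop :=
  LowerEdge n ε a b ∨ UpperEdge n ε a b

/-- `IsHook n ε a lo hi` : the hook of the arrow of `Q` between `a` and `a+1` is the
maximal path supported on the interval `[lo, hi]`.
If `ε a = true` (arrow `a → a+1`, source `a`), the hook is the maximal decreasing path
starting at `a`; if `ε a = false` (arrow `a+1 → a`, source `a+1`), the hook is the
maximal increasing path starting at `a+1`. -/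
def IsHook (n : ℕ) (ε : ℕ → Bool) (a lo hi : ℕ) : Prop :=
  if ε a = true then
    hi = a ∧ 1 ≤ lo ∧ lo ≤ a ∧ (∀ ℓ, lo ≤ ℓ → ℓ < a → ε ℓ = false) ∧
      (lo = 1 ∨ ε (lo - 1) = true)
  else
    lo = a + 1 ∧ a + 1 ≤ hi ∧ hi ≤ n + 2 ∧ (∀ ℓ, a + 1 ≤ ℓ → ℓ < hi → ε ℓ = true) ∧
      (hi = n + 2 ∨ ε hi = false)

/-- `IsCohook n ε a lo hi` : the cohook of the arrow of `Q` between `a` and `a+1` is the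
maximal path supported on the interval `[lo, hi]`, ending at the target of the arrow. -/
def IsCohook (n : ℕ) (ε : ℕ → Bool) (a lo hi : ℕ) : Prop :=
  if ε a = true then
    lo = a + 1 ∧ a + 1 ≤ hi ∧ hi ≤ n + 2 ∧ (∀ ℓ, a + 1 ≤ ℓ → ℓ < hi → ε ℓ = false) ∧
      (hi = n + 2 ∨ ε hi = true)
  else
    hi = a ∧ 1 ≤ lo ∧ lo ≤ a ∧ (∀ ℓ, lo ≤ ℓ → ℓ < a → ε ℓ = true) ∧
      (lo = 1 ∨ ε (lo - 1) = false)

/-- Counterclockwise neighbor `R⁻¹(ℓ)` of the vertex `ℓ` of the polygon `P(Q)`, for the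
cyclic order `0`, lower-barred vertices increasing, `n+2`, upper-barred vertices
decreasing. -/
def Rinv (n : ℕ) (ε : ℕ → Bool) (ℓ : ℕ) : ℕ :=
  if ℓ = n + 2 then sSup ({0} ∪ {x | 1 ≤ x ∧ x ≤ n + 1 ∧ ε x = true})
  else if 1 ≤ ℓ ∧ ℓ ≤ n + 1 ∧ ε ℓ = true then
    sSup ({0} ∪ {x | 1 ≤ x ∧ x < ℓ ∧ ε x = true})
  else
    sInf ({n + 2} ∪ {x | ℓ < x ∧ x ≤ n + 1 ∧ ε x = false})

/-- `γ(i′,j′)` is a pivot of `γ(i,j)`. -/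
def IsPivot (n : ℕ) (ε : ℕ → Bool) (i j i' j' : ℕ) : Prop :=
  (i' = Rinv n ε i ∧ j' = j ∧ Rinv n ε i < j) ∨
    (i' = i ∧ j' = Rinv n ε j ∧ i < Rinv n ε j)

/-! ### Geometry of the polygon `P(Q)`.

The plane is identified with `ℂ`; `p x` is the vertex of the polygon labeled `x`,
for `0 ≤ x ≤ n+2`. -/

/-- The hypotheses on the points `p 0, …, p (n+2)` realizing the polygon `P(Q)`:
strictly increasing `x`-coordinates; `p 0` and `p (n+2)` on a common horizontal line `L`;
upper-barred vertices above `L`, lower-barred vertices below `L`; convex position. -/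
def PolyPts (n : ℕ) (ε : ℕ → Bool) (p : ℕ → ℂ) : Prop :=
  (∀ a b, a < b → b ≤ n + 2 → (p a).re < (p b).re) ∧
    (p (n + 2)).im = (p 0).im ∧
    (∀ i, 1 ≤ i → i ≤ n + 1 →
      (ε i = true → (p 0).im < (p i).im) ∧ (ε i = false → (p i).im < (p 0).im)) ∧
    ∀ i, i ≤ n + 2 → p i ∉ convexHull ℝ (p '' {j | j ≤ n + 2 ∧ j ≠ i})

/-- The line segment `γ(e.1, e.2)` of the polygon. -/
def Seg (p : ℕ → ℂ) (e : ℕ × ℕ) : Set ℂ := segment ℝ (p e.1) (p e.2)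

/-- Two segments cross when they intersect in a point that is not a common endpoint. -/
def Cross (p : ℕ → ℂ) (e f : ℕ × ℕ) : Prop :=
  ∃ z, z ∈ Seg p e ∧ z ∈ Seg p f ∧
    ¬((z = p e.1 ∨ z = p e.2) ∧ (z = p f.1 ∨ z = p f.2))

/-- Slope of the segment `γ(e.1, e.2)`. -/
def slope (p : ℕ → ℂ) (e : ℕ × ℕ) : ℝ :=
  ((p e.2).im - (p e.1).im) / ((p e.2).re - (p e.1).re)

def ValidPair (n : ℕ) (e : ℕ × ℕ) : Prop := e.1 < e.2 ∧ e.2 ≤ n + 2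

/-- A triangulation of `P(Q)`: a maximal collection of pairwise noncrossing segments. -/
def IsTriangulation (n : ℕ) (p : ℕ → ℂ) (T : Finset (ℕ × ℕ)) : Prop :=
  (∀ e ∈ T, ValidPair n e) ∧ (∀ e ∈ T, ∀ f ∈ T, e ≠ f → ¬Cross p e f) ∧
    ∀ e, ValidPair n e → e ∉ T → ∃ f ∈ T, Cross p e f

/-- Cross product of two planar vectors; positive iff `(u, v)` is counterclockwise. -/
def cross2 (u v : ℂ) : ℝ := u.re * v.im - u.im * v.re

/-- Arrows of the adjacency quiver `Q(T)` of a triangulation `T`: `e → f` whenever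
`e` and `f` are sides of a common triangle of `T` and `f` follows `e` going
counterclockwise around that triangle. -/
def TriArrow (p : ℕ → ℂ) (T : Finset (ℕ × ℕ)) (e f : ℕ × ℕ) : Prop :=
  ∃ a b c : ℕ, a < b ∧ b < c ∧ (a, b) ∈ T ∧ (b, c) ∈ T ∧ (a, c) ∈ T ∧
    ((0 < cross2 (p b - p a) (p c - p a) ∧
        ((e = (a, b) ∧ f = (b, c)) ∨ (e = (b, c) ∧ f = (a, c)) ∨
          (e = (a, c) ∧ f = (a, b)))) ∨
      (cross2 (p b - p a) (p c - p a) < 0 ∧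
        ((e = (a, c) ∧ f = (b, c)) ∨ (e = (b, c) ∧ f = (a, b)) ∨
          (e = (a, b) ∧ f = (a, c)))))

/-! ### Representations of `Q` -/

/-- A finite dimensional representation of the quiver `Q` of type `A_{n+2}` over `k`.
The vector spaces are indexed by `ℕ`, and are required to vanish outside the set
`{1, …, n+2}` of vertices of `Q`.  For each `i`, `fwd i : V i → V (i+1)` is the structure
map of the arrow `i → i+1` (it is required to vanish when the arrow is oriented in the
other direction, i.e. `ε i = false`) and `bwd i : V (i+1) → V i` is the structure map of
the arrow `i+1 → i` (required to vanish when `ε i = true`). -/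
structure ARep (k : Type) [Field k] (n : ℕ) (ε : ℕ → Bool) where
  V : ℕ → Type
  [acg : ∀ x, AddCommGroup (V x)]
  [mod : ∀ x, Module k (V x)]
  [fdim : ∀ x, FiniteDimensional k (V x)]
  triv : ∀ x, x = 0 ∨ n + 2 < x → ∀ v : V x, v = 0
  fwd : ∀ i, V i →ₗ[k] V (i + 1)
  bwd : ∀ i, V (i + 1) →ₗ[k] V i
  fwd_zero : ∀ i, ε i = false → fwd i = 0
  bwd_zero : ∀ i, ε i = true → bwd i = 0

attribute [instance] ARep.acg ARep.mod ARep.fdim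

variable {k : Type} [Field k] {n : ℕ} {ε : ℕ → Bool}

/-- Morphisms of representations. -/
@[ext]
structure ARep.Hom (M N : ARep k n ε) where
  app : ∀ x, M.V x →ₗ[k] N.V x
  comm_fwd : ∀ i (v : M.V i), app (i + 1) (M.fwd i v) = N.fwd i (app i v)
  comm_bwd : ∀ i (v : M.V (i + 1)), app i (M.bwd i v) = N.bwd i (app (i + 1) v)

/-- The identity morphism. -/
def ARep.Hom.id (M : ARep k n ε) : M.Hom M :=
  ⟨fun _ => LinearMap.id, fun _ _ => rfl, fun _ _ => rfl⟩

/-- Composition of morphisms. -/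
def ARep.Hom.comp {M N P : ARep k n ε} (g : N.Hom P) (f : M.Hom N) : M.Hom P where
  app x := (g.app x).comp (f.app x)
  comm_fwd i v := by simp only [LinearMap.comp_apply, f.comm_fwd, g.comm_fwd]
  comm_bwd i v := by simp only [LinearMap.comp_apply, f.comm_bwd, g.comm_bwd]

/-- Sum of two morphisms. -/
def ARep.Hom.add {M N : ARep k n ε} (f g : M.Hom N) : M.Hom N where
  app x := f.app x + g.app x
  comm_fwd i v := by
    simp only [LinearMap.add_apply, f.comm_fwd, g.comm_fwd, map_add]
  comm_bwd i v := by
    simp only [LinearMap.add_apply, f.comm_bwd, g.comm_bwd, map_add]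

/-- Scalar multiple of a morphism. -/
def ARep.Hom.smul {M N : ARep k n ε} (c : k) (f : M.Hom N) : M.Hom N where
  app x := c • f.app x
  comm_fwd i v := by simp only [LinearMap.smul_apply, f.comm_fwd, map_smul]
  comm_bwd i v := by simp only [LinearMap.smul_apply, f.comm_bwd, map_smul]

/-- Isomorphism of representations. -/
def ARep.Iso (M N : ARep k n ε) : Prop :=
  ∃ f : M.Hom N, ∀ x, Function.Bijective (f.app x)

/-- The zero representation(s). -/
def ARep.IsZero (M : ARep k n ε) : Prop := ∀ x, ∀ v : M.V x, v = 0

/-- The support of a representation. -/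
def ARep.supp (M : ARep k n ε) : Set ℕ := {x | ∃ v : M.V x, v ≠ 0}

/-- Direct sum of two representations. -/
def ARep.dsum (M N : ARep k n ε) : ARep k n ε where
  V x := M.V x × N.V x
  acg _ := by infer_instance
  mod _ := by infer_instance
  fdim _ := by infer_instance
  triv x hx v := by
    have h1 := M.triv x hx v.1
    have h2 := N.triv x hx v.2
    exact Prod.ext h1 h2
  fwd i := (M.fwd i).prodMap (N.fwd i)
  bwd i := (M.bwd i).prodMap (N.bwd i)
  fwd_zero i h := by
    show (M.fwd i).prodMap (N.fwd i) = 0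
    rw [M.fwd_zero i h, N.fwd_zero i h]
    apply LinearMap.ext; rintro ⟨a, b⟩; simp
  bwd_zero i h := by
    show (M.bwd i).prodMap (N.bwd i) = 0
    rw [M.bwd_zero i h, N.bwd_zero i h]
    apply LinearMap.ext; rintro ⟨a, b⟩; simp

/-- One dimensional space `k` if `P` holds, `0` otherwise (as a submodule of `k`). -/
def fiber (k : Type) [Field k] (P : Prop) : Submodule k k := if P then ⊤ else ⊥

/-- The canonical map `fiber k P → fiber k Q` : "identity" if `P ∧ Q`, zero otherwise. -/
def fiberMap (k : Type) [Field k] (P Q : Prop) : fiber k P →ₗ[k] fiber k Q :=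
  if h : P ∧ Q then
    { toFun := fun v => ⟨(v : k), by
        have hQ : fiber k Q = ⊤ := if_pos h.2
        rw [hQ]; exact Submodule.mem_top⟩
      map_add' := fun _ _ => rfl
      map_smul' := fun _ _ => rfl }
  else 0

/-- The zero representation. -/
def zeroRep (k : Type) [Field k] (n : ℕ) (ε : ℕ → Bool) : ARep k n ε where
  V _ := ↥(fiber k False)
  acg _ := by infer_instance
  mod _ := by infer_instance
  fdim _ := by infer_instance
  triv x _ v := by
    have hfib : fiber k False = ⊥ := if_neg (fun h : False => h.elim)
    obtain ⟨w, hw⟩ := v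
    apply Subtype.ext
    have hb : w ∈ (⊥ : Submodule k k) := hfib ▸ hw
    exact (Submodule.mem_bot k).mp hb
  fwd _ := 0
  bwd _ := 0
  fwd_zero _ _ := rfl
  bwd_zero _ _ := rfl

/-- The condition for a vertex `x` to be in the support of the interval representation
`M(i,j)`. -/
def SuppCond (n i j x : ℕ) : Prop := i ≤ x ∧ x ≤ j ∧ 1 ≤ x ∧ x ≤ n + 2

/-- The interval (string) representation `M(i,j)` of `Q`: one dimensional at each vertex
`x` with `i ≤ x ≤ j`, zero elsewhere, with identity maps on all arrows whose endpoints
both lie in `[i,j]`. -/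
def intervalRep (k : Type) [Field k] (n : ℕ) (ε : ℕ → Bool) (i j : ℕ) : ARep k n ε where
  V x := ↥(fiber k (SuppCond n i j x))
  acg _ := by infer_instance
  mod _ := by infer_instance
  fdim _ := by infer_instance
  triv x hx v := by
    have hP : ¬SuppCond n i j x := by simp only [SuppCond]; omega
    have hfib : fiber k (SuppCond n i j x) = ⊥ := if_neg hP
    obtain ⟨w, hw⟩ := v
    apply Subtype.ext
    have hb : w ∈ (⊥ : Submodule k k) := hfib ▸ hw
    exact (Submodule.mem_bot k).mp hb
  fwd ℓ :=
    if ε ℓ = true then fiberMap k (SuppCond n i j ℓ) (SuppCond n i j (ℓ + 1)) else 0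
  bwd ℓ :=
    if ε ℓ = true then 0 else fiberMap k (SuppCond n i j (ℓ + 1)) (SuppCond n i j ℓ)
  fwd_zero ℓ h := by simp [h]
  bwd_zero ℓ h := by simp [h]

/-- Direct sum of a list of representations. -/
def dsumList (k : Type) [Field k] (n : ℕ) (ε : ℕ → Bool) :
    List (ARep k n ε) → ARep k n ε
  | [] => zeroRep k n ε
  | M :: L => M.dsum (dsumList k n ε L)

/-- Indecomposable representations. -/
def ARep.Indec (M : ARep k n ε) : Prop :=
  ¬M.IsZero ∧ ∀ A B : ARep k n ε, M.Iso (A.dsum B) → A.IsZero ∨ B.IsZero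

/-- `A` is a direct summand of `T`. -/
def ARep.IsSummand (A T : ARep k n ε) : Prop := ∃ B : ARep k n ε, T.Iso (A.dsum B)

/-- A representation is basic when it has no repeated indecomposable direct summand. -/
def ARep.Basic (T : ARep k n ε) : Prop :=
  ∀ A : ARep k n ε, A.Indec → ¬(A.dsum A).IsSummand T

/-- A short exact sequence `0 → B → E → A → 0`. -/
structure SES (B A : ARep k n ε) where
  E : ARep k n ε
  ι : B.Hom E
  π : E.Hom A
  inj : ∀ x, Function.Injective (ι.app x)
  surj : ∀ x, Function.Surjective (π.app x)
  exct : ∀ x (v : E.V x), π.app x v = 0 ↔ ∃ u, ι.app x u = v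

/-- A short exact sequence splits. -/
def SES.Splits {B A : ARep k n ε} (σ : SES B A) : Prop :=
  ∃ r : σ.E.Hom B, ∀ x (v : B.V x), r.app x (σ.ι.app x v) = v

/-- `Ext¹(A, B) = 0` : every short exact sequence `0 → B → E → A → 0` splits. -/
def ExtZero (A B : ARep k n ε) : Prop := ∀ σ : SES B A, σ.Splits

/-- `Ext¹(A,B) ≅ k`, generated by (the class of) a short exact sequence
`0 → B → E → A → 0` with indecomposable middle term `E`: there is a non-split such
sequence `σ` with `σ.E` indecomposable such that every non-split sequence is equivalent
to a nonzero scalar multiple of `σ`. -/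
def ExtOneDimIndecMid (A B : ARep k n ε) : Prop :=
  ∃ σ : SES B A, ¬σ.Splits ∧ σ.E.Indec ∧
    ∀ τ : SES B A, ¬τ.Splits → ∃ c : k, c ≠ 0 ∧
      ∃ φ : σ.E.Hom τ.E, (∀ x, Function.Bijective (φ.app x)) ∧
        (∀ x (v : B.V x), φ.app x (σ.ι.app x v) = τ.ι.app x v) ∧
        (∀ x (v : σ.E.V x), τ.π.app x (φ.app x v) = c • σ.π.app x v)

/-- Almost rigid representations. -/
def AlmostRigid (T : ARep k n ε) : Prop :=
  T.Basic ∧ ∀ A B : ARep k n ε, A.Indec → B.Indec → A.IsSummand T → B.IsSummand T →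
    ExtZero A B ∨ ExtOneDimIndecMid A B

/-- Maximal almost rigid representations. -/
def MaxAlmostRigid (T : ARep k n ε) : Prop :=
  AlmostRigid T ∧ ∀ M : ARep k n ε, ¬M.IsZero → ¬AlmostRigid (T.dsum M)

/-- `f` is a section. -/
def ARep.Hom.IsSection {M N : ARep k n ε} (f : M.Hom N) : Prop :=
  ∃ g : N.Hom M, ∀ x (v : M.V x), g.app x (f.app x v) = v

/-- `f` is a retraction. -/
def ARep.Hom.IsRetraction {M N : ARep k n ε} (f : M.Hom N) : Prop :=
  ∃ g : N.Hom M, ∀ x (v : N.V x), f.app x (g.app x v) = v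

/-- Irreducible morphisms: `f` is neither a section nor a retraction, and in every
factorization `f = g ∘ h` either `h` is a section or `g` is a retraction. -/
def ARep.Hom.Irred {M N : ARep k n ε} (f : M.Hom N) : Prop :=
  ¬f.IsSection ∧ ¬f.IsRetraction ∧
    ∀ (Z : ARep k n ε) (h : M.Hom Z) (g : Z.Hom N),
      (∀ x (v : M.V x), f.app x v = g.app x (h.app x v)) → h.IsSection ∨ g.IsRetraction

/-- Subrepresentations : families of subspaces closed under the structure maps. -/
structure Subrep (M : ARep k n ε) where
  U : ∀ x, Submodule k (M.V x)
  fwd_mem : ∀ i, ∀ v ∈ U i, M.fwd i v ∈ U (i + 1)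
  bwd_mem : ∀ i, ∀ v ∈ U (i + 1), M.bwd i v ∈ U i

/-- The central charge `Z(M) = Σ_{x=1}^{n+2} dim_k(M_x) · (p_x − p_{x−1})`. -/
def charge (p : ℕ → ℂ) (M : ARep k n ε) : ℂ :=
  ∑ x ∈ Finset.Icc 1 (n + 2), (Module.finrank k (M.V x) : ℂ) * (p x - p (x - 1))

/-- The central charge of a subrepresentation. -/
def subCharge (p : ℕ → ℂ) {M : ARep k n ε} (L : Subrep M) : ℂ :=
  ∑ x ∈ Finset.Icc 1 (n + 2), (Module.finrank k (L.U x) : ℂ) * (p x - p (x - 1))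

/-- The representation `F(T) = ⊕_{γ(a,b) ∈ T} M(a+1, b)` attached to a collection `T` of
segments of the polygon `P(Q)`. -/
def FRep (k : Type) [Field k] (n : ℕ) (ε : ℕ → Bool) (T : Finset (ℕ × ℕ)) : ARep k n ε :=
  dsumList k n ε (T.toList.map fun e => intervalRep k n ε (e.1 + 1) e.2)

end CambrianA

namespace CambrianA

/-!
Order the possible left endpoints of segments, and likewise the right endpoints, counterclockwise.
A morphism `M(i+1,j) → M(i'+1,j')` is determined up to a scalar, and a nonzero one exists exactly
when `(i,j) ≤ (i',j')` in the product order and the two intervals overlap. A representation of a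
type `A` quiver is a sum of intervals, so if such a morphism factors through `Z`, one of the
interval summands of `Z` already carries a nonzero composite, and that interval lies between
`(i,j)` and `(i',j')`. Hence the irreducible morphisms between intervals are the nonzero ones along
covering relations. In each factor `b` covers `a` exactly when `b = R⁻¹(a)`, so covering relations
in the product are pivots.
-/

section

variable {k : Type} [Field k] {n : ℕ} {ε : ℕ → Bool}

/-! ### Endpoints and chords -/

/-- Position of a left endpoint in the counterclockwise order of the polygon cut open at `n + 2`:
upper-barred vertices decreasing, then `0`, then lower-barred vertices increasing. -/
def leftKey (ε : ℕ → Bool) (x : ℕ) : ℤ :=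
  if ε x = true then -x else x

/-- Position of a right endpoint in the counterclockwise order of the polygon cut open at `0`:
lower-barred vertices increasing, then `n + 2`, then upper-barred vertices decreasing. -/
def rightKey (n : ℕ) (ε : ℕ → Bool) (x : ℕ) : ℤ :=
  if ε x = true then n + 2 - x else x - (n + 2)

/-- The possible left endpoints of segments, ordered counterclockwise through `leftKey`. -/
@[ext]
structure LeftEnd (n : ℕ) (_ε : ℕ → Bool) where
  val : ℕ
  val_le : val ≤ n + 1

/-- The possible right endpoints of segments, ordered counterclockwise through `rightKey`. -/
@[ext]
structure RightEnd (n : ℕ) (_ε : ℕ → Bool) where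
  val : ℕ
  one_le : 1 ≤ val
  val_le : val ≤ n + 2

instance : LinearOrder (LeftEnd n ε) :=
  LinearOrder.lift' (fun a => leftKey ε a.val) fun a b h => LeftEnd.ext <| by
    simp only [leftKey] at h
    grind

instance : LinearOrder (RightEnd n ε) :=
  LinearOrder.lift' (fun a => rightKey n ε a.val) fun a b h => RightEnd.ext <| by
    have := a.val_le
    have := b.val_le
    simp only [rightKey] at h
    grind

theorem LeftEnd.lt_iff {a b : LeftEnd n ε} :
    a < b ↔ (a.val < b.val ∧ ε b.val = false) ∨ (b.val < a.val ∧ ε a.val = true) := by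
  change leftKey ε a.val < leftKey ε b.val ↔ _
  simp only [leftKey]
  grind

theorem RightEnd.lt_iff {a b : RightEnd n ε} :
    a < b ↔ (a.val < b.val ∧ ε a.val = false) ∨ (b.val < a.val ∧ ε b.val = true) := by
  have := a.val_le
  have := b.val_le
  change rightKey n ε a.val < rightKey n ε b.val ↔ _
  simp only [rightKey]
  grind

theorem LeftEnd.le_iff {a b : LeftEnd n ε} :
    a ≤ b ↔ a.val = b.val ∨ (a.val < b.val ∧ ε b.val = false) ∨
      (b.val < a.val ∧ ε a.val = true) := by
  rw [le_iff_eq_or_lt, lt_iff, LeftEnd.ext_iff]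

theorem RightEnd.le_iff {a b : RightEnd n ε} :
    a ≤ b ↔ a.val = b.val ∨ (a.val < b.val ∧ ε a.val = false) ∨
      (b.val < a.val ∧ ε b.val = true) := by
  rw [le_iff_eq_or_lt, lt_iff, RightEnd.ext_iff]

/-- A segment of the polygon as a pair of endpoints, with the product of the counterclockwise
orders. Pairs whose left endpoint does not precede the right one are allowed. -/
abbrev Chord (n : ℕ) (ε : ℕ → Bool) : Type := LeftEnd n ε × RightEnd n ε

/-- The vertices of the quiver supporting the interval representation attached to a chord. -/
def Chord.support (s : Chord n ε) : Set ℕ := Set.Ioc s.1.val s.2.val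

theorem Chord.mem_support {s : Chord n ε} {x : ℕ} : x ∈ s.support ↔ s.1.val < x ∧ x ≤ s.2.val :=
  Iff.rfl

theorem Chord.le_iff {s t : Chord n ε} :
    s ≤ t ↔
      (s.1.val = t.1.val ∨ (s.1.val < t.1.val ∧ ε t.1.val = false) ∨
        (t.1.val < s.1.val ∧ ε s.1.val = true)) ∧
      (s.2.val = t.2.val ∨ (s.2.val < t.2.val ∧ ε s.2.val = false) ∨
        (t.2.val < s.2.val ∧ ε t.2.val = true)) := by
  rw [Prod.le_def, LeftEnd.le_iff, RightEnd.le_iff]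

theorem Chord.mem_of_le_of_fwd {s t : Chord n ε} (h : s ≤ t) {x : ℕ} (hx : ε x = true)
    (hs : x ∈ s.support) (ht : x + 1 ∈ t.support) : x + 1 ∈ s.support ∧ x ∈ t.support := by
  rw [Chord.le_iff] at h
  simp only [Chord.mem_support] at *
  grind

theorem Chord.mem_of_le_of_bwd {s t : Chord n ε} (h : s ≤ t) {x : ℕ} (hx : ε x = false)
    (hs : x + 1 ∈ s.support) (ht : x ∈ t.support) : x ∈ s.support ∧ x + 1 ∈ t.support := by
  rw [Chord.le_iff] at h
  simp only [Chord.mem_support] at *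
  grind

theorem Chord.le_of_overlap {s t : Chord n ε} (h : (s.support ∩ t.support).Nonempty)
    (hfwd : ∀ x, ε x = true → x ∈ s.support → x + 1 ∈ t.support →
      (x + 1 ∈ s.support ↔ x ∈ t.support))
    (hbwd : ∀ x, ε x = false → x + 1 ∈ s.support → x ∈ t.support →
      (x ∈ s.support ↔ x + 1 ∈ t.support)) :
    s ≤ t := by
  obtain ⟨y, hs, ht⟩ := h
  rw [Chord.le_iff]
  simp only [Chord.mem_support] at *
  -- The order can only fail at an arrow next to one of the four endpoints.
  have := hfwd s.1.val
  have := hfwd t.1.val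
  have := hfwd s.2.val
  have := hfwd t.2.val
  have := hbwd s.1.val
  have := hbwd t.1.val
  have := hbwd s.2.val
  have := hbwd t.2.val
  grind

theorem Chord.inter_support_subset {s p t : Chord n ε} (hsp : s ≤ p) (hpt : p ≤ t) :
    s.support ∩ t.support ⊆ p.support := by
  rw [Chord.le_iff] at hsp hpt
  rintro x ⟨hs, ht⟩
  simp only [Chord.mem_support] at *
  grind

/-! ### Interval representations in coordinates -/

/-- The interval representation `M(i + 1, j)` attached to the segment from `i` to `j`. -/
abbrev chordRep (k : Type) [Field k] (s : Chord n ε) : ARep k n ε :=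
  intervalRep k n ε (s.1.val + 1) s.2.val

theorem suppCond_iff_mem_support {s : Chord n ε} {x : ℕ} :
    SuppCond n (s.1.val + 1) s.2.val x ↔ x ∈ s.support := by
  have := s.2.val_le
  rw [Chord.mem_support, SuppCond]
  omega

theorem mem_fiber_iff {P : Prop} {c : k} : c ∈ fiber k P ↔ P ∨ c = 0 := by
  by_cases h : P
  · rw [fiber, if_pos h]
    exact iff_of_true Submodule.mem_top (Or.inl h)
  · rw [fiber, if_neg h, Submodule.mem_bot, or_iff_right h]

theorem coe_fiberMap_of_pos {P Q : Prop} (hQ : Q) (v : fiber k P) :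
    (fiberMap k P Q v : k) = v := by
  by_cases hP : P
  · rw [fiberMap, dif_pos ⟨hP, hQ⟩]
    rfl
  · rw [(mem_fiber_iff.1 v.2).resolve_left hP, fiberMap, dif_neg (mt And.left hP)]
    rfl

/-- The coordinate at the vertex `x` on the interval representation of `s`, in which every
nonzero structure map is the identity. -/
def coord (s : Chord n ε) (x : ℕ) : (chordRep k s).V x →ₗ[k] k :=
  Submodule.subtype _

/-- The vector of coordinate `1` at a vertex of the support, and `0` elsewhere. -/
def basisVector (s : Chord n ε) (x : ℕ) : (chordRep k s).V x :=
  ⟨if x ∈ s.support then 1 else 0, by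
    rw [mem_fiber_iff, suppCond_iff_mem_support]
    by_cases h : x ∈ s.support <;> simp [h]⟩

theorem coord_injective (s : Chord n ε) (x : ℕ) : Function.Injective (coord (k := k) s x) :=
  Subtype.val_injective

theorem coord_basisVector {s : Chord n ε} {x : ℕ} (h : x ∈ s.support) :
    coord (k := k) s x (basisVector s x) = 1 :=
  if_pos h

theorem coord_of_notMem {s : Chord n ε} {x : ℕ} (h : x ∉ s.support) (v : (chordRep k s).V x) :
    coord s x v = 0 :=
  (mem_fiber_iff.1 v.2).resolve_left (mt suppCond_iff_mem_support.1 h)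

theorem eq_zero_of_notMem {s : Chord n ε} {x : ℕ} (h : x ∉ s.support) (v : (chordRep k s).V x) :
    v = 0 :=
  coord_injective s x <| by rw [coord_of_notMem h, map_zero]

theorem coord_fwd {s : Chord n ε} {x : ℕ} (hε : ε x = true) (h : x + 1 ∈ s.support)
    (v : (chordRep k s).V x) : coord s (x + 1) ((chordRep k s).fwd x v) = coord s x v := by
  have : (chordRep k s).fwd x = fiberMap k _ _ := if_pos hε
  rw [this]
  exact coe_fiberMap_of_pos (suppCond_iff_mem_support.2 h) v

theorem coord_bwd {s : Chord n ε} {x : ℕ} (hε : ε x = false) (h : x ∈ s.support)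
    (v : (chordRep k s).V (x + 1)) :
    coord s x ((chordRep k s).bwd x v) = coord s (x + 1) v := by
  have : (chordRep k s).bwd x = fiberMap k _ _ := if_neg (by simp [hε])
  rw [this]
  exact coe_fiberMap_of_pos (suppCond_iff_mem_support.2 h) v

theorem eq_coord_smul_basisVector {s : Chord n ε} {x : ℕ} (v : (chordRep k s).V x) :
    v = coord s x v • basisVector s x := by
  apply coord_injective s x
  rw [map_smul, smul_eq_mul]
  by_cases h : x ∈ s.support
  · rw [coord_basisVector h, mul_one]
  · rw [coord_of_notMem h, zero_mul]

/-! ### Families of vectors and covectors -/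

/-- A family of vectors of `Z` along the support of `s`, compatible with the structure maps:
the images of the basis vectors under a morphism from `chordRep k s` to `Z`. -/
structure IsVectorFamily (Z : ARep k n ε) (s : Chord n ε) (u : ∀ x, Z.V x) : Prop where
  eq_zero : ∀ x ∉ s.support, u x = 0
  fwd_eq : ∀ x ∈ s.support, ε x = true → Z.fwd x (u x) = u (x + 1)
  bwd_eq : ∀ x, x + 1 ∈ s.support → ε x = false → Z.bwd x (u (x + 1)) = u x

/-- A family of linear forms on `Z` along the support of `t`, compatible with the structure maps:
the coordinates of a morphism from `Z` to `chordRep k t`. -/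
structure IsCovectorFamily (Z : ARep k n ε) (t : Chord n ε) (φ : ∀ x, Module.Dual k (Z.V x)) :
    Prop where
  eq_zero : ∀ x ∉ t.support, φ x = 0
  apply_fwd : ∀ x, x + 1 ∈ t.support → ε x = true → ∀ v, φ (x + 1) (Z.fwd x v) = φ x v
  apply_bwd : ∀ x ∈ t.support, ε x = false → ∀ v, φ x (Z.bwd x v) = φ (x + 1) v

section Families

variable {Z W : ARep k n ε} {s t : Chord n ε} {u : ∀ x, Z.V x} {φ : ∀ x, Module.Dual k (Z.V x)}

theorem isVectorFamily_basisVector (s : Chord n ε) :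
    IsVectorFamily (chordRep k s) s (basisVector s) where
  eq_zero x hx := coord_injective s x <| by rw [coord_of_notMem hx, map_zero]
  fwd_eq x hx hε := coord_injective s _ <| by
    by_cases h : x + 1 ∈ s.support
    · rw [coord_fwd hε h, coord_basisVector hx, coord_basisVector h]
    · rw [coord_of_notMem h, coord_of_notMem h]
  bwd_eq x hx hε := coord_injective s _ <| by
    by_cases h : x ∈ s.support
    · rw [coord_bwd hε h, coord_basisVector hx, coord_basisVector h]
    · rw [coord_of_notMem h, coord_of_notMem h]

theorem isCovectorFamily_coord (t : Chord n ε) : IsCovectorFamily (chordRep k t) t (coord t) where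
  eq_zero _ hx := LinearMap.ext (coord_of_notMem hx)
  apply_fwd _ hx hε := coord_fwd hε hx
  apply_bwd _ hx hε := coord_bwd hε hx

theorem IsVectorFamily.map (hu : IsVectorFamily Z s u) (f : Z.Hom W) :
    IsVectorFamily W s fun x => f.app x (u x) where
  eq_zero x hx := by rw [hu.eq_zero x hx, map_zero]
  fwd_eq x hx hε := by rw [← f.comm_fwd, hu.fwd_eq x hx hε]
  bwd_eq x hx hε := by rw [← f.comm_bwd, hu.bwd_eq x hx hε]

theorem IsCovectorFamily.comp (hφ : IsCovectorFamily Z t φ) (f : W.Hom Z) :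
    IsCovectorFamily W t fun x => φ x ∘ₗ f.app x where
  eq_zero x hx := by rw [hφ.eq_zero x hx, LinearMap.zero_comp]
  apply_fwd x hx hε v := by
    rw [LinearMap.comp_apply, f.comm_fwd, hφ.apply_fwd x hx hε, LinearMap.comp_apply]
  apply_bwd x hx hε v := by
    rw [LinearMap.comp_apply, f.comm_bwd, hφ.apply_bwd x hx hε, LinearMap.comp_apply]

/-- The morphism out of an interval representation with prescribed images of the basis vectors. -/
def homOfVectorFamily (hu : IsVectorFamily Z s u) : (chordRep k s).Hom Z where
  app x := (coord s x).smulRight (u x)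
  comm_fwd x v := by
    simp only [LinearMap.smulRight_apply, map_smul]
    cases hε : ε x with
    | false =>
      simp only [ARep.fwd_zero _ _ hε, LinearMap.zero_apply, map_zero, zero_smul, smul_zero]
    | true =>
      by_cases hx : x ∈ s.support <;> by_cases hx' : x + 1 ∈ s.support
      · rw [hu.fwd_eq x hx hε, coord_fwd hε hx']
      · rw [hu.fwd_eq x hx hε, hu.eq_zero _ hx', smul_zero, smul_zero]
      · rw [coord_fwd hε hx', coord_of_notMem hx, zero_smul, zero_smul]
      · rw [coord_of_notMem hx, coord_of_notMem hx', zero_smul, zero_smul]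
  comm_bwd x v := by
    simp only [LinearMap.smulRight_apply, map_smul]
    cases hε : ε x with
    | true =>
      simp only [ARep.bwd_zero _ _ hε, LinearMap.zero_apply, map_zero, zero_smul, smul_zero]
    | false =>
      by_cases hx : x ∈ s.support <;> by_cases hx' : x + 1 ∈ s.support
      · rw [hu.bwd_eq x hx' hε, coord_bwd hε hx]
      · rw [coord_bwd hε hx, coord_of_notMem hx', zero_smul, zero_smul]
      · rw [hu.bwd_eq x hx' hε, hu.eq_zero _ hx, smul_zero, smul_zero]
      · rw [coord_of_notMem hx, coord_of_notMem hx', zero_smul, zero_smul]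

/-- The morphism into an interval representation with prescribed coordinates. -/
def homOfCovectorFamily (hφ : IsCovectorFamily Z t φ) : Z.Hom (chordRep k t) where
  app x := (φ x).smulRight (basisVector t x)
  comm_fwd x v := by
    apply coord_injective t (x + 1)
    simp only [LinearMap.smulRight_apply, map_smul]
    by_cases hx' : x + 1 ∈ t.support
    · cases hε : ε x with
      | false =>
        simp only [ARep.fwd_zero _ _ hε, LinearMap.zero_apply, map_zero, zero_smul, smul_zero]
      | true =>
        rw [hφ.apply_fwd x hx' hε, coord_fwd hε hx']
        by_cases hx : x ∈ t.support
        · rw [coord_basisVector hx, coord_basisVector hx']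
        · rw [hφ.eq_zero x hx, LinearMap.zero_apply, zero_smul, zero_smul]
    · rw [coord_of_notMem hx', coord_of_notMem hx', smul_zero, smul_zero]
  comm_bwd x v := by
    apply coord_injective t x
    simp only [LinearMap.smulRight_apply, map_smul]
    by_cases hx : x ∈ t.support
    · cases hε : ε x with
      | true =>
        simp only [ARep.bwd_zero _ _ hε, LinearMap.zero_apply, map_zero, zero_smul, smul_zero]
      | false =>
        rw [hφ.apply_bwd x hx hε, coord_bwd hε hx]
        by_cases hx' : x + 1 ∈ t.support
        · rw [coord_basisVector hx, coord_basisVector hx']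
        · rw [hφ.eq_zero _ hx', LinearMap.zero_apply, zero_smul, zero_smul]
    · rw [coord_of_notMem hx, coord_of_notMem hx, smul_zero, smul_zero]

theorem IsVectorFamily.pairing_fwd (hu : IsVectorFamily Z s u) (hφ : IsCovectorFamily Z t φ)
    {x : ℕ} (hε : ε x = true) (hs : x ∈ s.support) (ht : x + 1 ∈ t.support) :
    φ (x + 1) (u (x + 1)) = φ x (u x) := by
  rw [← hu.fwd_eq x hs hε, hφ.apply_fwd x ht hε]

theorem IsVectorFamily.pairing_bwd (hu : IsVectorFamily Z s u) (hφ : IsCovectorFamily Z t φ)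
    {x : ℕ} (hε : ε x = false) (hs : x + 1 ∈ s.support) (ht : x ∈ t.support) :
    φ (x + 1) (u (x + 1)) = φ x (u x) := by
  rw [← hu.bwd_eq x hs hε, hφ.apply_bwd x ht hε]

theorem IsVectorFamily.pairing_eq (hu : IsVectorFamily Z s u) (hφ : IsCovectorFamily Z t φ)
    {x y : ℕ} (hx : x ∈ s.support ∩ t.support) (hy : y ∈ s.support ∩ t.support) :
    φ x (u x) = φ y (u y) := by
  wlog hxy : x ≤ y generalizing x y
  · exact (this hy hx (le_of_not_ge hxy)).symm
  induction y, hxy using Nat.le_induction with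
  | base => rfl
  | succ y hxy ih =>
    have hy' : y ∈ s.support ∩ t.support :=
      ⟨⟨hx.1.1.trans_le hxy, y.le_succ.trans hy.1.2⟩, ⟨hx.2.1.trans_le hxy, y.le_succ.trans hy.2.2⟩⟩
    rw [ih hy']
    cases hε : ε y with
    | true => exact (hu.pairing_fwd hφ hε hy'.1 hy.2).symm
    | false => exact (hu.pairing_bwd hφ hε hy.1 hy'.2).symm

theorem IsVectorFamily.mem_of_pairing_ne_zero (hu : IsVectorFamily Z s u)
    (hφ : IsCovectorFamily Z t φ) {x : ℕ} (h : φ x (u x) ≠ 0) : x ∈ s.support ∩ t.support := by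
  constructor <;> by_contra hx
  · exact h (by rw [hu.eq_zero x hx, map_zero])
  · exact h (by rw [hφ.eq_zero x hx, LinearMap.zero_apply])

theorem IsVectorFamily.le_of_pairing_ne_zero (hu : IsVectorFamily Z s u)
    (hφ : IsCovectorFamily Z t φ) {y : ℕ} (h : φ y (u y) ≠ 0) : s ≤ t := by
  have hy := hu.mem_of_pairing_ne_zero hφ h
  have pairing_ne_zero {x : ℕ} (hx : x ∈ s.support ∩ t.support) : φ x (u x) ≠ 0 :=
    hu.pairing_eq hφ hx hy ▸ h
  have mem {x : ℕ} (hx : φ x (u x) ≠ 0) := hu.mem_of_pairing_ne_zero hφ hx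
  refine Chord.le_of_overlap ⟨y, hy⟩ (fun x hε hs ht => ?_) fun x hε hs ht => ?_
  · have := hu.pairing_fwd hφ hε hs ht
    exact ⟨fun hs' => (mem (this ▸ pairing_ne_zero ⟨hs', ht⟩)).2,
      fun ht' => (mem (this ▸ pairing_ne_zero ⟨hs, ht'⟩)).1⟩
  · have := hu.pairing_bwd hφ hε hs ht
    exact ⟨fun hs' => (mem (this ▸ pairing_ne_zero ⟨hs', ht⟩)).2,
      fun ht' => (mem (this ▸ pairing_ne_zero ⟨hs, ht'⟩)).1⟩

end Families

/-! ### Morphisms between interval representations -/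

section IntervalHom

variable {s p t : Chord n ε}

theorem mem_and_le_of_app_ne_zero {f : (chordRep k s).Hom (chordRep k t)} {x : ℕ}
    (h : f.app x ≠ 0) : x ∈ s.support ∩ t.support ∧ s ≤ t := by
  have hu := (isVectorFamily_basisVector s).map f
  have hφ := isCovectorFamily_coord (k := k) t
  have pairing_ne_zero : coord t x (f.app x (basisVector s x)) ≠ 0 := by
    refine fun h0 => h (LinearMap.ext fun v => ?_)
    rw [eq_coord_smul_basisVector v, map_smul, coord_injective t x (h0.trans (map_zero _).symm),
      smul_zero, LinearMap.zero_apply]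
  exact ⟨hu.mem_of_pairing_ne_zero hφ pairing_ne_zero, hu.le_of_pairing_ne_zero hφ pairing_ne_zero⟩

theorem isCovectorFamily_of_le (h : s ≤ t) :
    IsCovectorFamily (chordRep k s) t fun x => if x ∈ t.support then coord (k := k) s x else 0 where
  eq_zero _ hx := if_neg hx
  apply_fwd x hx hε v := by
    by_cases hs : x ∈ s.support
    · obtain ⟨hs', ht⟩ := Chord.mem_of_le_of_fwd h hε hs hx
      rw [if_pos hx, if_pos ht, coord_fwd hε hs']
    · rw [eq_zero_of_notMem hs v, map_zero, map_zero, map_zero]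
  apply_bwd x hx hε v := by
    by_cases hs : x + 1 ∈ s.support
    · obtain ⟨hs', ht⟩ := Chord.mem_of_le_of_bwd h hε hs hx
      rw [if_pos hx, if_pos ht, coord_bwd hε hs']
    · rw [eq_zero_of_notMem hs v, map_zero, map_zero, map_zero]

/-- The morphism between comparable interval representations that is the identity in coordinates
on the common support. -/
def canonicalHom (h : s ≤ t) : (chordRep k s).Hom (chordRep k t) :=
  homOfCovectorFamily (isCovectorFamily_of_le h)

theorem coord_canonicalHom (h : s ≤ t) {x : ℕ} (hx : x ∈ t.support) (v : (chordRep k s).V x) :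
    coord t x ((canonicalHom h).app x v) = coord s x v := by
  change coord t x ((if x ∈ t.support then coord (k := k) s x else 0) v •
    basisVector (k := k) t x) = _
  rw [if_pos hx, map_smul, coord_basisVector hx, smul_eq_mul, mul_one]

theorem hom_chordRep_ext {Z : ARep k n ε} {f g : Z.Hom (chordRep k t)}
    (h : ∀ x ∈ t.support, ∀ v, coord t x (f.app x v) = coord t x (g.app x v)) : f = g := by
  refine ARep.Hom.ext (funext fun x => LinearMap.ext fun v => ?_)
  by_cases hx : x ∈ t.support
  · exact coord_injective t x (h x hx v)
  · rw [eq_zero_of_notMem hx (f.app x v), eq_zero_of_notMem hx (g.app x v)]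

theorem canonicalHom_refl (s : Chord n ε) : canonicalHom (k := k) (le_refl s) = ARep.Hom.id _ :=
  hom_chordRep_ext fun _ hx => coord_canonicalHom le_rfl hx

theorem canonicalHom_comp (hsp : s ≤ p) (hpt : p ≤ t) :
    (canonicalHom hpt).comp (canonicalHom hsp) = canonicalHom (k := k) (hsp.trans hpt) := by
  refine hom_chordRep_ext fun x hx v => ?_
  rw [coord_canonicalHom _ hx]
  refine (coord_canonicalHom hpt hx _).trans ?_
  by_cases hs : x ∈ s.support
  · exact coord_canonicalHom hsp (Chord.inter_support_subset hsp hpt ⟨hs, hx⟩) v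
  · rw [eq_zero_of_notMem hs v, map_zero, map_zero, map_zero]

theorem exists_eq_smul_canonicalHom (h : s ≤ t) {f : (chordRep k s).Hom (chordRep k t)} {y : ℕ}
    (hf : f.app y ≠ 0) : ∃ c ≠ 0, f = (canonicalHom h).smul c := by
  have hy := (mem_and_le_of_app_ne_zero hf).1
  have hu := (isVectorFamily_basisVector s).map f
  set c := coord t y (f.app y (basisVector s y)) with hc
  have hfc : f = (canonicalHom h).smul c := by
    refine hom_chordRep_ext fun x hx v => ?_
    change _ = coord t x (c • (canonicalHom h).app x v)
    rw [map_smul, coord_canonicalHom h hx, smul_eq_mul]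
    by_cases hs : x ∈ s.support
    · rw [hc, ← hu.pairing_eq (isCovectorFamily_coord t) ⟨hs, hx⟩ hy, mul_comm, ← smul_eq_mul,
        ← map_smul, ← map_smul, ← eq_coord_smul_basisVector]
    · rw [eq_zero_of_notMem hs v, map_zero, map_zero, map_zero, mul_zero]
  refine ⟨c, fun hc0 => hf ?_, hfc⟩
  rw [hfc, hc0]
  exact zero_smul k _

theorem exists_app_eq_smul {f : (chordRep k s).Hom (chordRep k s)} {y : ℕ} (hf : f.app y ≠ 0) :
    ∃ c : k, c ≠ 0 ∧ ∀ x v, f.app x v = c • v := by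
  obtain ⟨c, hc, rfl⟩ := exists_eq_smul_canonicalHom le_rfl hf
  rw [canonicalHom_refl]
  exact ⟨c, hc, fun _ _ => rfl⟩

theorem isSection_of_comp_ne_zero {Z : ARep k n ε} {f : (chordRep k s).Hom Z}
    {g : Z.Hom (chordRep k s)} {y : ℕ} (h : (g.comp f).app y ≠ 0) : f.IsSection := by
  obtain ⟨c, hc, hgf⟩ := exists_app_eq_smul h
  refine ⟨g.smul c⁻¹, fun x v => ?_⟩
  change c⁻¹ • (g.comp f).app x v = v
  rw [hgf, inv_smul_smul₀ hc]

theorem isRetraction_of_comp_ne_zero {Z : ARep k n ε} {f : (chordRep k s).Hom Z}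
    {g : Z.Hom (chordRep k s)} {y : ℕ} (h : (g.comp f).app y ≠ 0) : g.IsRetraction := by
  obtain ⟨c, hc, hgf⟩ := exists_app_eq_smul h
  refine ⟨f.smul c⁻¹, fun x v => ?_⟩
  change g.app x (c⁻¹ • f.app x v) = v
  rw [map_smul]
  exact (congrArg _ (hgf x v)).trans (inv_smul_smul₀ hc v)

theorem app_ne_zero_of_leftInverse {Z : ARep k n ε} {f : (chordRep k s).Hom Z}
    {g : Z.Hom (chordRep k s)} (hgf : ∀ x v, g.app x (f.app x v) = v) {x : ℕ}
    (hx : x ∈ s.support) : f.app x ≠ 0 ∧ g.app x ≠ 0 := by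
  have basisVector_ne_zero : basisVector (k := k) s x ≠ 0 := fun h =>
    one_ne_zero ((coord_basisVector hx).symm.trans (by rw [h, map_zero]))
  constructor <;> refine fun h => basisVector_ne_zero ?_ <;> rw [← hgf x (basisVector s x), h]
  · rw [LinearMap.zero_apply, map_zero]
  · rw [LinearMap.zero_apply]

theorem eq_of_leftInverse (hs : s.support.Nonempty) {f : (chordRep k s).Hom (chordRep k t)}
    {g : (chordRep k t).Hom (chordRep k s)} (hgf : ∀ x v, g.app x (f.app x v) = v) : s = t := by
  obtain ⟨x, hx⟩ := hs
  obtain ⟨hf, hg⟩ := app_ne_zero_of_leftInverse hgf hx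
  exact (mem_and_le_of_app_ne_zero hf).2.antisymm (mem_and_le_of_app_ne_zero hg).2

end IntervalHom

/-! ### Splitting off an interval -/

section LinearForms

variable {K R A B : Type*} [Field K] [Ring R] [AddCommGroup A] [AddCommGroup B]

theorem exists_dual_comp_eq_of_comap_le_ker [Module K A] [Module K B]
    (α : A →ₗ[K] B) {T : Submodule K B}
    {φ : Module.Dual K A} (h : T.comap α ≤ LinearMap.ker φ) :
    ∃ ψ : Module.Dual K B, ψ ∘ₗ α = φ ∧ T ≤ LinearMap.ker ψ := by
  have hφ : φ ∈ (LinearMap.ker (T.mkQ ∘ₗ α)).dualAnnihilator := by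
    rwa [Submodule.mem_dualAnnihilator, LinearMap.ker_comp, Submodule.ker_mkQ]
  rw [← LinearMap.range_dualMap_eq_dualAnnihilator_ker] at hφ
  obtain ⟨ψ, rfl⟩ := hφ
  exact ⟨ψ ∘ₗ T.mkQ, rfl, fun t ht => by simp [(Submodule.Quotient.mk_eq_zero T).2 ht]⟩

theorem exists_dual_eq_one_of_notMem [Module K A] {T : Submodule K A} {a : A} (h : a ∉ T) :
    ∃ φ : Module.Dual K A, φ a = 1 ∧ T ≤ LinearMap.ker φ := by
  obtain ⟨φ, hφ, hT⟩ := Submodule.exists_le_ker_of_notMem h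
  refine ⟨(φ a)⁻¹ • φ, inv_mul_cancel₀ hφ, fun t ht => ?_⟩
  rw [LinearMap.mem_ker, LinearMap.smul_apply, LinearMap.mem_ker.1 (hT ht), smul_zero]

theorem map_lt_map_of_inf_ker_le [Module R A] [Module R B]
    {α : A →ₗ[R] B} {Y X : Submodule R A} (h : Y < X)
    (hX : X ⊓ LinearMap.ker α ≤ Y) : Y.map α < X.map α :=
  (Submodule.map_mono h.le).lt_of_not_ge fun hle =>
    h.ne <| eq_of_le_of_inf_le_of_sup_le h.le (le_inf hX inf_le_right)
      (sup_le ((LinearMap.map_le_map_iff α).1 hle) le_sup_right)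

theorem comap_lt_comap_of_le_sup_range [Module R A] [Module R B]
    {α : A →ₗ[R] B} {Y X : Submodule R B} (h : Y < X)
    (hX : X ≤ Y ⊔ LinearMap.range α) : Y.comap α < X.comap α :=
  (Submodule.comap_mono h.le).lt_of_not_ge fun hle => by
    rw [← Submodule.map_le_iff_le_comap, Submodule.map_comap_eq, inf_comm] at hle
    exact h.ne <| eq_of_le_of_inf_le_of_sup_le h.le (le_inf hle inf_le_right)
      (sup_le hX le_sup_right)

end LinearForms

/-- Vectors `u` and linear forms `φ` on `Z` along the vertices `p, …, q`, zero beyond `q`,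
compatible with all structure maps between vertices from `p` on, and pairing to `1` at `p`.
If `Z` vanishes before `p`, such data split off an interval representation. -/
structure DualChain (Z : ARep k n ε) (p q : ℕ) (u : ∀ x, Z.V x)
    (φ : ∀ x, Module.Dual k (Z.V x)) : Prop where
  le : p ≤ q
  vec_eq_zero : ∀ x, q < x → u x = 0
  form_eq_zero : ∀ x, q < x → φ x = 0
  pairing : φ p (u p) = 1
  fwd_vec : ∀ x, p ≤ x → x ≤ q → ε x = true → Z.fwd x (u x) = u (x + 1)
  bwd_vec : ∀ x, p ≤ x → x < q → ε x = false → Z.bwd x (u (x + 1)) = u x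
  form_fwd : ∀ x, p ≤ x → x < q → ε x = true → φ (x + 1) ∘ₗ Z.fwd x = φ x
  form_bwd : ∀ x, p ≤ x → x ≤ q → ε x = false → φ x ∘ₗ Z.bwd x = φ (x + 1)

section Splitting

variable {Z : ARep k n ε}

theorem DualChain.single {p : ℕ} {a : Z.V p} {α : Module.Dual k (Z.V p)} (h : α a = 1)
    (hfwd : ε p = true → Z.fwd p a = 0) (hbwd : ε p = false → α ∘ₗ Z.bwd p = 0) :
    DualChain Z p p (Function.update 0 p a) (Function.update 0 p α) where
  le := le_rfl
  vec_eq_zero _ hx := by rw [Function.update_of_ne hx.ne', Pi.zero_apply]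
  form_eq_zero _ hx := by rw [Function.update_of_ne hx.ne', Pi.zero_apply]
  pairing := by rwa [Function.update_self, Function.update_self]
  fwd_vec x hp hx hε := by
    obtain rfl := hp.antisymm hx
    rw [Function.update_self, hfwd hε, Function.update_of_ne p.succ_ne_self, Pi.zero_apply]
  bwd_vec x hp hx := absurd hx hp.not_gt
  form_fwd x hp hx := absurd hx hp.not_gt
  form_bwd x hp hx hε := by
    obtain rfl := hp.antisymm hx
    rw [Function.update_self, hbwd hε, Function.update_of_ne p.succ_ne_self, Pi.zero_apply]

theorem DualChain.cons {p q : ℕ} {u : ∀ x, Z.V x} {φ : ∀ x, Module.Dual k (Z.V x)}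
    (h : DualChain Z (p + 1) q u φ) {a : Z.V p} {α : Module.Dual k (Z.V p)}
    (hfwd : ε p = true → Z.fwd p a = u (p + 1) ∧ φ (p + 1) ∘ₗ Z.fwd p = α)
    (hbwd : ε p = false → Z.bwd p (u (p + 1)) = a ∧ α ∘ₗ Z.bwd p = φ (p + 1)) :
    DualChain Z p q (Function.update u p a) (Function.update φ p α) := by
  have u_of_lt {x : ℕ} (hx : p < x) : Function.update u p a x = u x :=
    Function.update_of_ne hx.ne' a u
  have φ_of_lt {x : ℕ} (hx : p < x) : Function.update φ p α x = φ x :=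
    Function.update_of_ne hx.ne' α φ
  refine ⟨by have := h.le; omega, fun x hx => ?_, fun x hx => ?_, ?_, fun x hp hx hε => ?_,
    fun x hp hx hε => ?_, fun x hp hx hε => ?_, fun x hp hx hε => ?_⟩
  · rw [u_of_lt (by have := h.le; omega), h.vec_eq_zero x hx]
  · rw [φ_of_lt (by have := h.le; omega), h.form_eq_zero x hx]
  · rw [Function.update_self, Function.update_self]
    cases hε : ε p with
    | true => rw [← (hfwd hε).2, LinearMap.comp_apply, (hfwd hε).1, h.pairing]
    | false => rw [← (hbwd hε).1, ← LinearMap.comp_apply, (hbwd hε).2, h.pairing]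
  · rcases hp.eq_or_lt with rfl | hp
    · rw [Function.update_self, u_of_lt p.lt_succ_self, (hfwd hε).1]
    · rw [u_of_lt hp, u_of_lt (hp.trans x.lt_succ_self), h.fwd_vec x hp hx hε]
  · rcases hp.eq_or_lt with rfl | hp
    · rw [Function.update_self, u_of_lt p.lt_succ_self, (hbwd hε).1]
    · rw [u_of_lt hp, u_of_lt (hp.trans x.lt_succ_self), h.bwd_vec x hp hx hε]
  · rcases hp.eq_or_lt with rfl | hp
    · rw [Function.update_self, φ_of_lt p.lt_succ_self, (hfwd hε).2]
    · rw [φ_of_lt hp, φ_of_lt (hp.trans x.lt_succ_self), h.form_fwd x hp hx hε]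
  · rcases hp.eq_or_lt with rfl | hp
    · rw [Function.update_self, φ_of_lt p.lt_succ_self, (hbwd hε).2]
    · rw [φ_of_lt hp, φ_of_lt (hp.trans x.lt_succ_self), h.form_bwd x hp hx hε]

/-- If the flag `Y < X` survives the arrow at `p`, push it to `p + 1`; otherwise end the chain. -/
theorem exists_dualChain (p : ℕ) {Y X : Submodule k (Z.V p)} (h : Y < X) :
    ∃ q u φ, q ≤ n + 2 ∧ DualChain Z p q u φ ∧ u p ∈ X ∧ Y ≤ LinearMap.ker (φ p) := by
  have hp : p ≤ n + 2 := by
    obtain ⟨a, -, ha⟩ := SetLike.exists_of_lt h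
    by_contra! hp
    exact ha (Z.triv p (Or.inr hp) a ▸ Y.zero_mem)
  cases hε : ε p with
  | true =>
    by_cases hker : X ⊓ LinearMap.ker (Z.fwd p) ≤ Y
    · obtain ⟨q, u, φ, hq, hc, ⟨a, haX, ha⟩, hY⟩ :=
        exists_dualChain (p + 1) (map_lt_map_of_inf_ker_le h hker)
      refine ⟨q, _, _, hq, hc.cons (a := a) (fun _ => ⟨ha, rfl⟩) (by simp [hε]), ?_, ?_⟩
      · rwa [Function.update_self]
      · rwa [Function.update_self, LinearMap.ker_comp, ← Submodule.map_le_iff_le_comap]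
    · obtain ⟨a, ⟨haX, hak⟩, haY⟩ := SetLike.not_le_iff_exists.1 hker
      obtain ⟨α, ha, hY⟩ := exists_dual_eq_one_of_notMem haY
      refine ⟨p, _, _, hp, .single ha (fun _ => hak) (by simp [hε]), ?_, ?_⟩ <;>
        rwa [Function.update_self]
  | false =>
    by_cases hrange : X ≤ Y ⊔ LinearMap.range (Z.bwd p)
    · obtain ⟨q, u, φ, hq, hc, huX, hY⟩ :=
        exists_dualChain (p + 1) (comap_lt_comap_of_le_sup_range h hrange)
      obtain ⟨α, hα, hYα⟩ := exists_dual_comp_eq_of_comap_le_ker (Z.bwd p) hY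
      refine ⟨q, _, _, hq, hc.cons (by simp [hε]) (fun _ => ⟨rfl, hα⟩), ?_, ?_⟩ <;>
        rwa [Function.update_self]
    · obtain ⟨a, haX, haY⟩ := SetLike.not_le_iff_exists.1 hrange
      obtain ⟨α, ha, hY⟩ := exists_dual_eq_one_of_notMem haY
      rw [sup_le_iff] at hY
      refine ⟨p, _, _, hp, .single ha (by simp [hε]) (fun _ => ?_), ?_, ?_⟩
      · exact LinearMap.range_le_ker_iff.1 hY.2
      · rwa [Function.update_self]
      · rw [Function.update_self]
        exact hY.1
termination_by n + 3 - p

end Splitting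

section Summand

variable {Z : ARep k n ε}

theorem DualChain.isVectorFamily {s : Chord n ε} {u : ∀ x, Z.V x} {φ : ∀ x, Module.Dual k (Z.V x)}
    (h : DualChain Z (s.1.val + 1) s.2.val u φ) (hZ : ∀ x ≤ s.1.val, ∀ v : Z.V x, v = 0) :
    IsVectorFamily Z s u where
  eq_zero x hx := (le_or_gt x s.1.val).elim (fun hle => hZ x hle _) fun hlt =>
    h.vec_eq_zero x (lt_of_not_ge fun hle => hx ⟨hlt, hle⟩)
  fwd_eq x hx hε := h.fwd_vec x hx.1 hx.2 hε
  bwd_eq x hx hε := (Nat.lt_succ_iff.1 hx.1).eq_or_lt.elim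
    (fun heq => (hZ x heq.ge _).trans (hZ x heq.ge _).symm) fun hlt => h.bwd_vec x hlt hx.2 hε

theorem DualChain.isCovectorFamily {s : Chord n ε} {u : ∀ x, Z.V x}
    {φ : ∀ x, Module.Dual k (Z.V x)} (h : DualChain Z (s.1.val + 1) s.2.val u φ)
    (hZ : ∀ x ≤ s.1.val, ∀ v : Z.V x, v = 0) : IsCovectorFamily Z s φ where
  eq_zero x hx := (le_or_gt x s.1.val).elim
    (fun hle => LinearMap.ext fun v => by rw [hZ x hle v, map_zero, map_zero]) fun hlt =>
    h.form_eq_zero x (lt_of_not_ge fun hle => hx ⟨hlt, hle⟩)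
  apply_fwd x hx hε v := (Nat.lt_succ_iff.1 hx.1).eq_or_lt.elim
    (fun heq => by rw [hZ x heq.ge v, map_zero, map_zero, map_zero]) fun hlt =>
    LinearMap.congr_fun (h.form_fwd x hlt hx.2 hε) v
  apply_bwd x hx hε v := LinearMap.congr_fun (h.form_bwd x hx.1 hx.2 hε) v

theorem homOfCovectorFamily_homOfVectorFamily {s : Chord n ε} {u : ∀ x, Z.V x}
    {φ : ∀ x, Module.Dual k (Z.V x)} (hu : IsVectorFamily Z s u) (hφ : IsCovectorFamily Z s φ)
    {y : ℕ} (h : φ y (u y) = 1) (x : ℕ) (v : (chordRep k s).V x) :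
    (homOfCovectorFamily hφ).app x ((homOfVectorFamily hu).app x v) = v := by
  by_cases hx : x ∈ s.support
  · have hy := hu.mem_of_pairing_ne_zero hφ (h.trans_ne one_ne_zero)
    change φ x (coord s x v • u x) • basisVector s x = v
    rw [map_smul, hu.pairing_eq hφ ⟨hx, hx⟩ hy, h, smul_eq_mul, mul_one,
      ← eq_coord_smul_basisVector]
  · rw [eq_zero_of_notMem hx v, map_zero, map_zero]

theorem exists_interval_summand (hZ : ¬Z.IsZero) :
    ∃ (s : Chord n ε) (ι : (chordRep k s).Hom Z) (π : Z.Hom (chordRep k s)),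
      s.support.Nonempty ∧ ∀ x v, π.app x (ι.app x v) = v := by
  have hex : ∃ p, ∃ v : Z.V p, v ≠ 0 := by simpa only [ARep.IsZero, not_forall] using hZ
  obtain ⟨p, ⟨v, hv⟩, hmin⟩ := Nat.findX hex
  simp only [not_exists, not_not] at hmin
  obtain _ | p := p
  · exact absurd (Z.triv 0 (Or.inl rfl) v) hv
  have bot_lt_top : (⊥ : Submodule k (Z.V (p + 1))) < ⊤ :=
    bot_lt_iff_ne_bot.2 fun h => hv ((Submodule.mem_bot k).1 (h ▸ Submodule.mem_top))
  obtain ⟨q, u, φ, hq, hc, -, -⟩ := exists_dualChain (p + 1) bot_lt_top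
  have hpq : p + 1 ≤ q := hc.le
  let s : Chord n ε := (⟨p, by omega⟩, ⟨q, by omega, hq⟩)
  have hZ' : ∀ x ≤ s.1.val, ∀ v : Z.V x, v = 0 := fun x hx => hmin x (Nat.lt_succ_of_le hx)
  have hu : IsVectorFamily Z s u := DualChain.isVectorFamily hc hZ'
  have hφ : IsCovectorFamily Z s φ := DualChain.isCovectorFamily hc hZ'
  exact ⟨s, homOfVectorFamily hu, homOfCovectorFamily hφ, ⟨p + 1, p.lt_succ_self, hpq⟩,
    homOfCovectorFamily_homOfVectorFamily hu hφ hc.pairing⟩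

end Summand

/-! ### Reduction of composites to interval summands -/

section Kernel

variable {M N W : ARep k n ε}

/-- The kernel of a morphism of representations. -/
def kerRep (f : M.Hom N) : ARep k n ε where
  V x := LinearMap.ker (f.app x)
  triv x hx v := Subtype.ext (M.triv x hx v)
  fwd x := (M.fwd x).restrict fun v hv => by
    rw [LinearMap.mem_ker] at hv ⊢
    rw [f.comm_fwd, hv, map_zero]
  bwd x := (M.bwd x).restrict fun v hv => by
    rw [LinearMap.mem_ker] at hv ⊢
    rw [f.comm_bwd, hv, map_zero]
  fwd_zero x hε := LinearMap.ext fun v => Subtype.ext <| by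
    rw [LinearMap.coe_restrict_apply, M.fwd_zero x hε, LinearMap.zero_apply, LinearMap.zero_apply,
      ZeroMemClass.coe_zero]
  bwd_zero x hε := LinearMap.ext fun v => Subtype.ext <| by
    rw [LinearMap.coe_restrict_apply, M.bwd_zero x hε, LinearMap.zero_apply, LinearMap.zero_apply,
      ZeroMemClass.coe_zero]

/-- The inclusion of the kernel of a morphism. -/
def kerIncl (f : M.Hom N) : (kerRep f).Hom M where
  app x := (LinearMap.ker (f.app x)).subtype
  comm_fwd _ _ := rfl
  comm_bwd _ _ := rfl

/-- The factorization through the kernel of `f` of a morphism killed by `f`. -/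
def kerLift (f : M.Hom N) (g : W.Hom M) (h : ∀ x v, f.app x (g.app x v) = 0) :
    W.Hom (kerRep f) where
  app x := (g.app x).codRestrict _ (h x)
  comm_fwd x v := Subtype.ext (g.comm_fwd x v)
  comm_bwd x v := Subtype.ext (g.comm_bwd x v)

/-- The total dimension of a representation. -/
def ARep.totalDim (M : ARep k n ε) : ℕ :=
  ∑ x ∈ Finset.range (n + 3), Module.finrank k (M.V x)

theorem totalDim_kerRep_lt {f : M.Hom N} {x : ℕ} (h : f.app x ≠ 0) :
    (kerRep f).totalDim < M.totalDim := by
  have hx : x < n + 3 := by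
    by_contra! hx
    exact h (LinearMap.ext fun v => by rw [M.triv x (Or.inr (by omega)) v, map_zero, map_zero])
  refine Finset.sum_lt_sum (fun x _ => Submodule.finrank_le (LinearMap.ker (f.app x)))
    ⟨x, Finset.mem_range.2 hx, Submodule.finrank_lt fun htop => h (LinearMap.ker_eq_top.1 htop)⟩

theorem exists_complement_projection {ι : N.Hom M} {π : M.Hom N}
    (hπι : ∀ x v, π.app x (ι.app x v) = v) :
    ∃ r : M.Hom (kerRep π), ∀ x v, (kerIncl π).app x (r.app x v) + ι.app x (π.app x v) = v := by
  let projection : M.Hom M := (ARep.Hom.id M).add ((ι.comp π).smul (-1))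
  have projection_app (x : ℕ) (v : M.V x) :
      projection.app x v = v + (-1 : k) • ι.app x (π.app x v) := rfl
  refine ⟨kerLift π projection fun x v => ?_, fun x v => ?_⟩
  · rw [projection_app, map_add, map_smul, hπι, neg_one_smul, add_neg_cancel]
  · change projection.app x v + _ = v
    rw [projection_app, neg_one_smul, neg_add_cancel_right]

end Kernel

/-- Split off interval summands of the middle term until one of them carries the composite. -/
theorem exists_comp_chordRep_ne_zero {M Z N : ARep k n ε} (f : M.Hom Z) (g : Z.Hom N) {y : ℕ}
    (h : (g.comp f).app y ≠ 0) :
    ∃ (s : Chord n ε) (ι : (chordRep k s).Hom Z) (π : Z.Hom (chordRep k s)),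
      ((g.comp ι).comp (π.comp f)).app y ≠ 0 := by
  have hZ : ¬Z.IsZero := fun hZ => h <| LinearMap.ext fun v =>
    (congrArg (g.app y) (hZ y (f.app y v))).trans (map_zero _)
  obtain ⟨s, ι, π, ⟨x, hx⟩, hπι⟩ := exists_interval_summand hZ
  by_cases hs : ((g.comp ι).comp (π.comp f)).app y = 0
  · obtain ⟨r, hr⟩ := exists_complement_projection hπι
    have comp_eq : ((g.comp (kerIncl π)).comp (r.comp f)).app y = (g.comp f).app y := by
      ext v
      have hv : g.app y (ι.app y (π.app y (f.app y v))) = 0 := LinearMap.congr_fun hs v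
      change g.app y ((kerIncl π).app y (r.app y (f.app y v))) = g.app y (f.app y v)
      conv_rhs => rw [← hr y (f.app y v), map_add, hv, add_zero]
    have : (kerRep π).totalDim < Z.totalDim :=
      totalDim_kerRep_lt (app_ne_zero_of_leftInverse hπι hx).2
    obtain ⟨t, ι', π', ht⟩ :=
      exists_comp_chordRep_ne_zero (r.comp f) (g.comp (kerIncl π)) (comp_eq ▸ h)
    exact ⟨t, (kerIncl π).comp ι', π'.comp r, ht⟩
  · exact ⟨s, ι, π, hs⟩
termination_by Z.totalDim

/-! ### Irreducible morphisms -/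

theorem ARep.Hom.Irred.exists_app_ne_zero {M N : ARep k n ε} {f : M.Hom N} (hf : f.Irred) :
    ∃ y, f.app y ≠ 0 := by
  obtain ⟨not_section, not_retraction, factor⟩ := hf
  by_contra! hzero
  have hf0 (x : ℕ) (v : M.V x) : f.app x v = 0 := by rw [hzero, LinearMap.zero_apply]
  rcases factor M ((ARep.Hom.id M).smul 0) f fun x v => by rw [hf0, hf0] with ⟨g, hg⟩ | hret
  · have hM (x : ℕ) (v : M.V x) : v = 0 := by
      rw [← hg x v, show ((ARep.Hom.id M).smul 0).app x v = 0 from zero_smul k v, map_zero]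
    exact not_section ⟨⟨fun _ => 0, fun _ _ => (hM _ _).trans (hM _ _).symm,
      fun _ _ => (hM _ _).trans (hM _ _).symm⟩, fun x v => (hM x _).trans (hM x v).symm⟩
  · exact not_retraction hret

section Irreducible

variable {s t : Chord n ε}

theorem irred_canonicalHom (h : s ⋖ t) (hst : (s.support ∩ t.support).Nonempty) :
    (canonicalHom (k := k) h.le).Irred := by
  obtain ⟨y, hs, ht⟩ := hst
  refine ⟨fun ⟨_, hg⟩ => h.ne (eq_of_leftInverse ⟨y, hs⟩ hg),
    fun ⟨_, hg⟩ => h.ne' (eq_of_leftInverse ⟨y, ht⟩ hg), fun Z f g hfac => ?_⟩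
  have comp_ne_zero : (g.comp f).app y ≠ 0 := fun h0 => one_ne_zero (α := k) <| by
    rw [← coord_basisVector hs, ← coord_canonicalHom h.le ht, hfac,
      ← map_zero (coord (k := k) t y)]
    exact congrArg _ (LinearMap.congr_fun h0 (basisVector s y))
  obtain ⟨p, ι, π, hp⟩ := exists_comp_chordRep_ne_zero f g comp_ne_zero
  have hπf : (π.comp f).app y ≠ 0 := fun h0 => hp <|
    (congrArg (fun l => (g.comp ι).app y ∘ₗ l) h0).trans (LinearMap.comp_zero _)
  have hgι : (g.comp ι).app y ≠ 0 := fun h0 => hp <|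
    (congrArg (fun l => l ∘ₗ (π.comp f).app y) h0).trans (LinearMap.zero_comp _)
  rcases h.eq_or_eq (mem_and_le_of_app_ne_zero hπf).2 (mem_and_le_of_app_ne_zero hgι).2 with
    rfl | rfl
  · exact Or.inl (isSection_of_comp_ne_zero hπf)
  · exact Or.inr (isRetraction_of_comp_ne_zero hgι)

theorem ARep.Hom.Irred.covBy {f : (chordRep k s).Hom (chordRep k t)} (hf : f.Irred) : s ⋖ t := by
  obtain ⟨y, hy⟩ := hf.exists_app_ne_zero
  obtain ⟨⟨hs, ht⟩, hle⟩ := mem_and_le_of_app_ne_zero hy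
  have hne : s ≠ t := by
    rintro rfl
    exact hf.1 (isSection_of_comp_ne_zero (g := ARep.Hom.id _) hy)
  refine ⟨hle.lt_of_ne hne, fun p hsp hpt => ?_⟩
  obtain ⟨c, -, hfc⟩ := exists_eq_smul_canonicalHom hle hy
  rcases hf.2.2 _ (canonicalHom hsp.le) ((canonicalHom hpt.le).smul c) fun x v => by
    rw [hfc, ← canonicalHom_comp hsp.le hpt.le]
    rfl with ⟨_, hg⟩ | ⟨_, hg⟩
  · exact hsp.ne (eq_of_leftInverse ⟨y, hs⟩ hg)
  · exact hpt.ne' (eq_of_leftInverse ⟨y, ht⟩ hg)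

theorem exists_irred_iff : (∃ f : (chordRep k s).Hom (chordRep k t), f.Irred) ↔
    s ⋖ t ∧ (s.support ∩ t.support).Nonempty := by
  refine ⟨fun ⟨f, hf⟩ => ⟨hf.covBy, ?_⟩, fun ⟨h, hst⟩ => ⟨_, irred_canonicalHom h hst⟩⟩
  obtain ⟨y, hy⟩ := hf.exists_app_ne_zero
  exact ⟨y, (mem_and_le_of_app_ne_zero hy).1⟩

end Irreducible

/-! ### The counterclockwise neighbor -/

theorem Rinv_isLeast {ℓ : ℕ} (hℓ : ℓ ≤ n + 1) (h : ℓ = 0 ∨ ε ℓ = false) :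
    IsLeast ({n + 2} ∪ {x | ℓ < x ∧ x ≤ n + 1 ∧ ε x = false}) (Rinv n ε ℓ) := by
  have hR : Rinv n ε ℓ = sInf ({n + 2} ∪ {x | ℓ < x ∧ x ≤ n + 1 ∧ ε x = false}) := by
    rw [Rinv, if_neg (by lia), if_neg (by grind)]
  rw [hR]
  exact ⟨Nat.sInf_mem ⟨n + 2, Or.inl rfl⟩, fun _ hx => Nat.sInf_le hx⟩

theorem Rinv_isGreatest {ℓ : ℕ} (h : ℓ = n + 2 ∨ 1 ≤ ℓ ∧ ℓ ≤ n + 1 ∧ ε ℓ = true) :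
    IsGreatest ({0} ∪ {x | 1 ≤ x ∧ x < ℓ ∧ ε x = true}) (Rinv n ε ℓ) := by
  have hR : Rinv n ε ℓ = sSup ({0} ∪ {x | 1 ≤ x ∧ x < ℓ ∧ ε x = true}) := by
    rcases h with rfl | h
    · simp only [Rinv, if_true, Nat.lt_succ_iff]
    · rw [Rinv, if_neg (by lia), if_pos h]
  have hbdd : BddAbove ({0} ∪ {x | 1 ≤ x ∧ x < ℓ ∧ ε x = true}) :=
    bddAbove_singleton.union ⟨ℓ, fun _ hx => hx.2.1.le⟩
  rw [hR]
  exact ⟨Nat.sSup_mem ⟨0, Or.inl rfl⟩ hbdd, fun _ hx => le_csSup hbdd hx⟩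

theorem LeftEnd.covBy_iff {a b : LeftEnd n ε} : a ⋖ b ↔ b.val = Rinv n ε a.val := by
  have hleast := Rinv_isLeast (ε := ε) a.val_le
  have hgreatest := Rinv_isGreatest (n := n) (ε := ε) (ℓ := a.val)
  simp only [IsLeast, IsGreatest, mem_lowerBounds, mem_upperBounds, Set.mem_union,
    Set.mem_singleton_iff, Set.mem_ofPred_eq] at hleast hgreatest
  have ha := a.val_le
  have hb := b.val_le
  constructor
  · rintro ⟨hab, hnot⟩
    rw [lt_iff] at hab
    have hr : Rinv n ε a.val ≤ n + 1 := by grind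
    have hnext := @hnot ⟨_, hr⟩
    simp only [lt_iff] at hnext
    grind
  · intro hbr
    refine ⟨lt_iff.2 (by grind), fun c hac hcb => ?_⟩
    have hc := c.val_le
    rw [lt_iff] at hac hcb
    grind

theorem RightEnd.covBy_iff {a b : RightEnd n ε} : a ⋖ b ↔ b.val = Rinv n ε a.val := by
  have hleast := Rinv_isLeast (n := n) (ε := ε) (ℓ := a.val)
  have hgreatest := Rinv_isGreatest (n := n) (ε := ε) (ℓ := a.val)
  simp only [IsLeast, IsGreatest, mem_lowerBounds, mem_upperBounds, Set.mem_union,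
    Set.mem_singleton_iff, Set.mem_ofPred_eq] at hleast hgreatest
  have ha := a.one_le
  have ha' := a.val_le
  have hb := b.one_le
  have hb' := b.val_le
  constructor
  · rintro ⟨hab, hnot⟩
    rw [lt_iff] at hab
    have hr : 1 ≤ Rinv n ε a.val ∧ Rinv n ε a.val ≤ n + 2 := by grind
    have hnext := @hnot ⟨_, hr.1, hr.2⟩
    simp only [lt_iff] at hnext
    grind
  · intro hbr
    refine ⟨lt_iff.2 (by grind), fun c hac hcb => ?_⟩
    have hc := c.one_le
    have hc' := c.val_le
    rw [lt_iff] at hac hcb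
    grind

theorem Chord.isPivot_iff_covBy {s t : Chord n ε} (ht : t.1.val < t.2.val) :
    IsPivot n ε s.1.val s.2.val t.1.val t.2.val ↔ s ⋖ t := by
  rw [Prod.covBy_iff, LeftEnd.covBy_iff, RightEnd.covBy_iff, LeftEnd.ext_iff, RightEnd.ext_iff,
    IsPivot]
  grind

theorem Chord.support_inter_nonempty_of_covBy {s t : Chord n ε} (hs : s.1.val < s.2.val)
    (ht : t.1.val < t.2.val) (h : s ⋖ t) : (s.support ∩ t.support).Nonempty := by
  rcases Prod.covBy_iff.1 h with ⟨-, heq⟩ | ⟨-, heq⟩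
  · exact ⟨s.2.val, ⟨hs, le_rfl⟩, by rwa [heq], heq ▸ le_rfl⟩
  · exact ⟨s.1.val + 1, ⟨Nat.lt_succ_self _, hs⟩, heq ▸ Nat.lt_succ_self _, heq ▸ ht⟩

end

/-- there is an irreducible morphism `M(i+1,j) → M(i′+1,j′)` if and only if
`γ(i′,j′)` is a pivot of `γ(i,j)`. -/
theorem stmt_7 (k : Type) [Field k] (n : ℕ) (ε : ℕ → Bool) (i j i' j' : ℕ)
    (h1 : i < j) (h2 : j ≤ n + 2) (h3 : i' < j') (h4 : j' ≤ n + 2)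
    (hne : (i, j) ≠ (i', j')) :
    (∃ f : (intervalRep k n ε (i + 1) j).Hom (intervalRep k n ε (i' + 1) j'), f.Irred) ↔
      IsPivot n ε i j i' j' := by
  let s : Chord n ε := (⟨i, by lia⟩, ⟨j, by lia, h2⟩)
  let t : Chord n ε := (⟨i', by lia⟩, ⟨j', by lia, h4⟩)
  calc (∃ f : (chordRep k s).Hom (chordRep k t), f.Irred)
      ↔ s ⋖ t ∧ (s.support ∩ t.support).Nonempty := exists_irred_iff
    _ ↔ s ⋖ t := and_iff_left_of_imp (Chord.support_inter_nonempty_of_covBy h1 h3)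
    _ ↔ IsPivot n ε i j i' j' := (Chord.isPivot_iff_covBy h3).symm

end CambrianA
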